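/- Let λ > λ' > 1 and let ĥ_0(ω) := λ sin(ω/(2λ)) / (λ' sin(ω/(2λ'))) for ω not a nonzero multiple of 2πλ', with ĥ_0(0) := 1. Then the second derivative satisfies |ĥ_0''(ω)| ≤ π/8 for all ω with |ω| ≤ λ'π; in particular |ĥ_0''(±λ'π)| = sin(πλ'/(2λ)) (λ² − λ'²) / (4 λ λ'³), and sin(πλ'/(2λ)) (λ² − λ'²) / (4 λ λ'³) ≤ π/8. -/

import Mathlib

noncomputable section
open scoped Real

/-- `ĥ₀(ω) = λ sin(ω/(2λ)) / (λ' sin(ω/(2λ')))`, with `ĥ₀(0) = 1`. -/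
def hhat0 (lam lam' ω : ℝ) : ℝ :=
  if ω = 0 then 1
  else (lam * Real.sin (ω / (2 * lam))) / (lam' * Real.sin (ω / (2 * lam')))

/-!
Up to the factor `b / a`, with `a = 1 / (2λ) ≤ b = 1 / (2λ')`, the function `ĥ₀` is
`f x = sin (a x) / sin (b x)`. The equation `(f · sin (b ·))'' = -a² f · sin (b ·)` reads
`f'' = (b² - a²) f - 2 b cot (b x) f'`. On `0 < x ≤ π / (2b)` the numerators of `f'` and `f''`
vanish at `0` and have nonnegative derivatives, so `f'` and `f''` are nonnegative and therefore
`0 ≤ f'' ≤ (b² - a²) f`, where `f ≤ a π / (2b)` by `sin y ≤ y` and Jordan's inequality. At `0` the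
bound persists by continuity, since `ĥ₀` is a quotient of two `sinc` functions and so analytic
there.
-/

open Filter Set Topology
open Real (sin cos sinc)

section Calculus

lemma odd_deriv_of_even {𝕜 F : Type*} [NontriviallyNormedField 𝕜] [NormedAddCommGroup F]
    [NormedSpace 𝕜 F] {f : 𝕜 → F} (hf : f.Even) : (deriv f).Odd := fun x => by
  rw [← neg_eq_iff_eq_neg, ← deriv_comp_neg, funext hf]

lemma even_deriv_of_odd {𝕜 F : Type*} [NontriviallyNormedField 𝕜] [NormedAddCommGroup F]
    [NormedSpace 𝕜 F] {f : 𝕜 → F} (hf : f.Odd) : (deriv f).Even := fun x => by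
  rw [← neg_inj, ← deriv_comp_neg, funext hf, deriv.fun_neg]

lemma le_of_hasDerivAt_nonneg {f f' : ℝ → ℝ} {c x : ℝ} (hcx : c ≤ x)
    (hf : ∀ t ∈ Icc c x, HasDerivAt f (f' t) t) (hf' : ∀ t ∈ Ioo c x, 0 ≤ f' t) : f c ≤ f x := by
  rw [← interior_Icc] at hf'
  exact monotoneOn_of_hasDerivWithinAt_nonneg (convex_Icc c x)
    (fun t ht => (hf t ht).continuousAt.continuousWithinAt)
    (fun t ht => (hf t (interior_subset ht)).hasDerivWithinAt) hf'
    (left_mem_Icc.2 hcx) (right_mem_Icc.2 hcx) hcx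

lemma analyticAt_sinc_zero : AnalyticAt ℝ sinc 0 := by
  obtain ⟨p, hp⟩ : AnalyticAt ℝ sin 0 := Real.analyticAt_sin
  rw [Real.sinc_eq_dslope]
  exact hp.has_fpower_series_dslope_fslope.analyticAt

end Calculus

section SinDivSin

variable {a b x : ℝ}

/-- The Wronskian of `sin (b x)` and `sin (a x)`, which is the numerator of the derivative of
`sin (a x) / sin (b x)` over the denominator `sin (b x) ^ 2`. -/
def sinWronskian (a b x : ℝ) : ℝ :=
  a * cos (a * x) * sin (b * x) - b * sin (a * x) * cos (b * x)

/-- The numerator of the second derivative of `sin (a x) / sin (b x)` over the denominator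
`sin (b x) ^ 3`. -/
def sinDivSinSecondNum (a b x : ℝ) : ℝ :=
  (b ^ 2 - a ^ 2) * sin (a * x) * sin (b * x) ^ 2 - 2 * b * cos (b * x) * sinWronskian a b x

lemma hasDerivAt_sin_const_mul (a x : ℝ) :
    HasDerivAt (fun t => sin (a * t)) (a * cos (a * x)) x := by
  simpa only [mul_comm] using (hasDerivAt_const_mul a).sin

lemma hasDerivAt_cos_const_mul (a x : ℝ) :
    HasDerivAt (fun t => cos (a * t)) (-(a * sin (a * x))) x := by
  simpa only [mul_comm, mul_neg] using (hasDerivAt_const_mul a).cos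

lemma hasDerivAt_sinWronskian (a b x : ℝ) :
    HasDerivAt (sinWronskian a b) ((b ^ 2 - a ^ 2) * sin (a * x) * sin (b * x)) x := by
  refine ((((hasDerivAt_cos_const_mul a x).const_mul a).mul (hasDerivAt_sin_const_mul b x)).sub
    (((hasDerivAt_sin_const_mul a x).const_mul b).mul
      (hasDerivAt_cos_const_mul b x))).congr_deriv ?_
  ring

lemma hasDerivAt_sinDivSinSecondNum (a b x : ℝ) :
    HasDerivAt (sinDivSinSecondNum a b)
      ((b ^ 2 - a ^ 2) * (a * cos (a * x)) * sin (b * x) ^ 2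
        + 2 * b ^ 2 * sin (b * x) * sinWronskian a b x) x := by
  refine ((((hasDerivAt_sin_const_mul a x).const_mul (b ^ 2 - a ^ 2)).mul
    ((hasDerivAt_sin_const_mul b x).pow 2)).sub
    (((hasDerivAt_cos_const_mul b x).const_mul (2 * b)).mul
      (hasDerivAt_sinWronskian a b x))).congr_deriv ?_
  simp only [Pi.pow_apply]
  ring

lemma hasDerivAt_sin_div_sin (hs : sin (b * x) ≠ 0) :
    HasDerivAt (fun t => sin (a * t) / sin (b * t))
      (sinWronskian a b x / sin (b * x) ^ 2) x := by
  refine ((hasDerivAt_sin_const_mul a x).div (hasDerivAt_sin_const_mul b x) hs).congr_deriv ?_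
  rw [sinWronskian]
  ring

lemma hasDerivAt_sinWronskian_div_sq (hs : sin (b * x) ≠ 0) :
    HasDerivAt (fun t => sinWronskian a b t / sin (b * t) ^ 2)
      (sinDivSinSecondNum a b x / sin (b * x) ^ 3) x := by
  refine ((hasDerivAt_sinWronskian a b x).div ((hasDerivAt_sin_const_mul b x).pow 2)
    (pow_ne_zero 2 hs)).congr_deriv ?_
  simp only [sinDivSinSecondNum, Pi.pow_apply]
  field_simp
  ring

lemma deriv_deriv_sin_div_sin (hs : sin (b * x) ≠ 0) :
    deriv (deriv fun t => sin (a * t) / sin (b * t)) x =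
      sinDivSinSecondNum a b x / sin (b * x) ^ 3 := by
  have hs_near : ∀ᶠ t in 𝓝 x, sin (b * t) ≠ 0 :=
    (hasDerivAt_sin_const_mul b x).continuousAt.eventually_ne hs
  have hderiv : (deriv fun t => sin (a * t) / sin (b * t)) =ᶠ[𝓝 x]
      fun t => sinWronskian a b t / sin (b * t) ^ 2 :=
    hs_near.mono fun t ht => (hasDerivAt_sin_div_sin ht).deriv
  rw [hderiv.deriv_eq, (hasDerivAt_sinWronskian_div_sq hs).deriv]

lemma sinWronskian_nonneg (ha : 0 ≤ a) (hab : a ≤ b) (hx : 0 ≤ x) (hbx : b * x ≤ π) :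
    0 ≤ sinWronskian a b x := by
  have hb : 0 ≤ b := ha.trans hab
  have hsq : 0 ≤ b ^ 2 - a ^ 2 := sub_nonneg.2 (by gcongr)
  have hsin : ∀ c, 0 ≤ c → c ≤ b → ∀ t ∈ Ioo 0 x, 0 ≤ sin (c * t) := fun c hc hcb t ht =>
    Real.sin_nonneg_of_nonneg_of_le_pi (mul_nonneg hc ht.1.le)
      ((mul_le_mul hcb ht.2.le ht.1.le hb).trans hbx)
  simpa [sinWronskian] using le_of_hasDerivAt_nonneg hx
    (fun t _ => hasDerivAt_sinWronskian a b t)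
    (fun t ht => mul_nonneg (mul_nonneg hsq (hsin a ha hab t ht)) (hsin b hb le_rfl t ht))

lemma sinDivSinSecondNum_nonneg (ha : 0 ≤ a) (hab : a ≤ b) (hx : 0 ≤ x) (hbx : b * x ≤ π / 2) :
    0 ≤ sinDivSinSecondNum a b x := by
  have hb : 0 ≤ b := ha.trans hab
  have hsq : 0 ≤ b ^ 2 - a ^ 2 := sub_nonneg.2 (by gcongr)
  have hderiv : ∀ t ∈ Ioo 0 x, 0 ≤ (b ^ 2 - a ^ 2) * (a * cos (a * t)) * sin (b * t) ^ 2
      + 2 * b ^ 2 * sin (b * t) * sinWronskian a b t := by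
    rintro t ⟨ht0, htx⟩
    have hbt : b * t ≤ π / 2 := (mul_le_mul_of_nonneg_left htx.le hb).trans hbx
    have hat : a * t ≤ π / 2 := (mul_le_mul_of_nonneg_right hab ht0.le).trans hbt
    have hbt_pi : b * t ≤ π := hbt.trans (half_le_self Real.pi_pos.le)
    have hcos : 0 ≤ cos (a * t) :=
      Real.cos_nonneg_of_neg_pi_div_two_le_of_le
        ((neg_nonpos.2 Real.pi_div_two_pos.le).trans (by positivity)) hat
    have hsin : 0 ≤ sin (b * t) := Real.sin_nonneg_of_nonneg_of_le_pi (by positivity) hbt_pi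
    have hW : 0 ≤ sinWronskian a b t := sinWronskian_nonneg ha hab ht0.le hbt_pi
    positivity
  simpa [sinDivSinSecondNum, sinWronskian] using
    le_of_hasDerivAt_nonneg hx (fun t _ => hasDerivAt_sinDivSinSecondNum a b t) hderiv

lemma sin_div_sin_le (ha : 0 ≤ a) (hb : 0 < b) (hx : 0 < x) (hbx : b * x ≤ π / 2) :
    sin (a * x) / sin (b * x) ≤ a * π / (2 * b) := by
  have hjordan : 2 / π * (b * x) ≤ sin (b * x) := Real.mul_le_sin (by positivity) hbx
  have hsin : 0 < sin (b * x) := lt_of_lt_of_le (by positivity) hjordan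
  rw [div_le_iff₀ hsin]
  calc sin (a * x) ≤ a * x := Real.sin_le (by positivity)
    _ = a * π / (2 * b) * (2 / π * (b * x)) := by field_simp
    _ ≤ a * π / (2 * b) * sin (b * x) := by gcongr

lemma sinDivSinSecondNum_div_cube_mem_Icc (ha : 0 ≤ a) (hb : 0 < b) (hab : a ≤ b) (hx : 0 < x)
    (hbx : b * x ≤ π / 2) :
    sinDivSinSecondNum a b x / sin (b * x) ^ 3 ∈
      Icc 0 ((b ^ 2 - a ^ 2) * (a * π / (2 * b))) := by
  have hbx0 : 0 < b * x := mul_pos hb hx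
  have hbx_pi : b * x < π := hbx.trans_lt (half_lt_self Real.pi_pos)
  have hsin : 0 < sin (b * x) := Real.sin_pos_of_pos_of_lt_pi hbx0 hbx_pi
  have hcos : 0 ≤ cos (b * x) := Real.cos_nonneg_of_neg_pi_div_two_le_of_le (by linarith) hbx
  have hW : 0 ≤ sinWronskian a b x := sinWronskian_nonneg ha hab hx.le hbx_pi.le
  have hsq : 0 ≤ b ^ 2 - a ^ 2 := sub_nonneg.2 (by gcongr)
  have hnum : sinDivSinSecondNum a b x ≤ (b ^ 2 - a ^ 2) * sin (a * x) * sin (b * x) ^ 2 :=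
    sub_le_self _ (by positivity)
  refine ⟨div_nonneg (sinDivSinSecondNum_nonneg ha hab hx.le hbx) (by positivity), ?_⟩
  calc sinDivSinSecondNum a b x / sin (b * x) ^ 3
      ≤ (b ^ 2 - a ^ 2) * sin (a * x) * sin (b * x) ^ 2 / sin (b * x) ^ 3 := by gcongr
    _ = (b ^ 2 - a ^ 2) * (sin (a * x) / sin (b * x)) := by field_simp
    _ ≤ (b ^ 2 - a ^ 2) * (a * π / (2 * b)) :=
        mul_le_mul_of_nonneg_left (sin_div_sin_le ha hb hx hbx) hsq

end SinDivSin

section Hhat0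

variable {lam lam' ω : ℝ}

lemma even_hhat0 (lam lam' : ℝ) : (hhat0 lam lam').Even := fun ω => by
  simp [hhat0, neg_div, div_neg]

lemma even_deriv_deriv_hhat0 (lam lam' : ℝ) : (deriv (deriv (hhat0 lam lam'))).Even :=
  even_deriv_of_odd (odd_deriv_of_even (even_hhat0 lam lam'))

lemma hhat0_eq_sinc_div_sinc (h : lam ≠ 0) (h' : lam' ≠ 0) :
    hhat0 lam lam' = fun ω => sinc (ω / (2 * lam)) / sinc (ω / (2 * lam')) := by
  funext ω
  rcases eq_or_ne ω 0 with rfl | hω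
  · simp [hhat0]
  · rw [hhat0, if_neg hω, Real.sinc_of_ne_zero (by positivity),
      Real.sinc_of_ne_zero (by positivity)]
    field_simp

lemma analyticAt_hhat0_zero (h : lam ≠ 0) (h' : lam' ≠ 0) : AnalyticAt ℝ (hhat0 lam lam') 0 := by
  have hsinc : ∀ c : ℝ, AnalyticAt ℝ (fun ω => sinc (ω / c)) 0 := fun c =>
    AnalyticAt.fun_comp (by simpa using analyticAt_sinc_zero) analyticAt_id.div_const
  rw [hhat0_eq_sinc_div_sinc h h']
  exact (hsinc _).div (hsinc _) (by simp)

lemma hhat0_eq_sin_div_sin (hω : ω ≠ 0) :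
    hhat0 lam lam' ω =
      lam / lam' * (sin ((2 * lam)⁻¹ * ω) / sin ((2 * lam')⁻¹ * ω)) := by
  rw [hhat0, if_neg hω, mul_div_mul_comm, div_eq_inv_mul ω, div_eq_inv_mul ω]

lemma deriv_deriv_hhat0 (hs : sin ((2 * lam')⁻¹ * ω) ≠ 0) :
    deriv (deriv (hhat0 lam lam')) ω =
      lam / lam' * (sinDivSinSecondNum (2 * lam)⁻¹ (2 * lam')⁻¹ ω /
        sin ((2 * lam')⁻¹ * ω) ^ 3) := by
  have hω : ω ≠ 0 := by
    rintro rfl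
    simp at hs
  have hnear : hhat0 lam lam' =ᶠ[𝓝 ω] fun t =>
      lam / lam' * (sin ((2 * lam)⁻¹ * t) / sin ((2 * lam')⁻¹ * t)) :=
    (eventually_ne_nhds hω).mono fun t ht => hhat0_eq_sin_div_sin ht
  rw [hnear.deriv.deriv_eq, ← deriv_deriv_sin_div_sin hs]
  simp only [deriv_const_mul_field']

lemma deriv_deriv_hhat0_mul_pi (h : lam ≠ 0) (h' : lam' ≠ 0) :
    deriv (deriv (hhat0 lam lam')) (lam' * π) =
      sin (π * lam' / (2 * lam)) * (lam ^ 2 - lam' ^ 2) / (4 * lam * lam' ^ 3) := by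
  have hb : (2 * lam')⁻¹ * (lam' * π) = π / 2 := by field_simp
  have ha : (2 * lam)⁻¹ * (lam' * π) = π * lam' / (2 * lam) := by ring
  have hs : sin ((2 * lam')⁻¹ * (lam' * π)) ≠ 0 := by
    rw [hb, Real.sin_pi_div_two]
    exact one_ne_zero
  rw [deriv_deriv_hhat0 hs, sinDivSinSecondNum, ha, hb, Real.sin_pi_div_two, Real.cos_pi_div_two]
  field_simp
  ring

lemma deriv_deriv_hhat0_mem_Icc_of_pos (h' : 0 < lam') (hle : lam' ≤ lam) (hω : 0 < ω)
    (hωπ : ω ≤ lam' * π) :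
    deriv (deriv (hhat0 lam lam')) ω ∈ Icc 0 (π / 8 * (1 / lam' ^ 2 - 1 / lam ^ 2)) := by
  have h : 0 < lam := h'.trans_le hle
  have hbω : (2 * lam')⁻¹ * ω ≤ π / 2 := by
    rw [inv_mul_le_iff₀ (by positivity)]
    linarith
  have hsin : 0 < sin ((2 * lam')⁻¹ * ω) :=
    Real.sin_pos_of_pos_of_lt_pi (by positivity) (hbω.trans_lt (half_lt_self Real.pi_pos))
  obtain ⟨hnonneg, hupper⟩ := sinDivSinSecondNum_div_cube_mem_Icc (a := (2 * lam)⁻¹)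
    (by positivity) (by positivity) (by gcongr) hω hbω
  rw [deriv_deriv_hhat0 hsin.ne']
  refine ⟨by positivity, (mul_le_mul_of_nonneg_left hupper (by positivity)).trans_eq ?_⟩
  field_simp
  ring

lemma deriv_deriv_hhat0_mem_Icc (h' : 0 < lam') (hle : lam' ≤ lam) (hω : |ω| ≤ lam' * π) :
    deriv (deriv (hhat0 lam lam')) ω ∈ Icc 0 (π / 8 * (1 / lam' ^ 2 - 1 / lam ^ 2)) := by
  have habs : deriv (deriv (hhat0 lam lam')) ω = deriv (deriv (hhat0 lam lam')) |ω| := by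
    rcases abs_choice ω with hω' | hω' <;> rw [hω']
    exact (even_deriv_deriv_hhat0 lam lam' ω).symm
  rw [habs]
  rcases (abs_nonneg ω).eq_or_lt with hzero | hpos
  · have hcont : ContinuousAt (deriv (deriv (hhat0 lam lam'))) 0 :=
      (analyticAt_hhat0_zero (h'.trans_le hle).ne' h'.ne').deriv.deriv.continuousAt
    rw [← hzero]
    refine isClosed_Icc.mem_of_tendsto (b := 𝓝[>] 0)
      (hcont.tendsto.mono_left nhdsWithin_le_nhds) ?_
    filter_upwards [Ioc_mem_nhdsGT (mul_pos h' Real.pi_pos)] with t ht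
    exact deriv_deriv_hhat0_mem_Icc_of_pos h' hle ht.1 ht.2
  · exact deriv_deriv_hhat0_mem_Icc_of_pos h' hle hpos hω

lemma pi_div_eight_mul_sub_le (h' : 1 ≤ lam') :
    π / 8 * (1 / lam' ^ 2 - 1 / lam ^ 2) ≤ π / 8 := by
  have hinv : 1 / lam' ^ 2 ≤ 1 := (div_le_one₀ (by positivity)).2 (one_le_pow₀ h')
  exact mul_le_of_le_one_right (by positivity) ((sub_le_self _ (by positivity)).trans hinv)

end Hhat0

theorem hhat0_second_deriv_bound_general (lam lam' : ℝ) (h' : 0 < lam') (hle : lam' ≤ lam) :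
    (∀ ω : ℝ, |ω| ≤ lam' * π →
      |deriv (deriv (hhat0 lam lam')) ω| ≤ π / 8 * (1 / lam' ^ 2 - 1 / lam ^ 2)) ∧
    |deriv (deriv (hhat0 lam lam')) (lam' * π)|
      = sin (π * lam' / (2 * lam)) * (lam ^ 2 - lam' ^ 2) / (4 * lam * lam' ^ 3) ∧
    |deriv (deriv (hhat0 lam lam')) (-(lam' * π))|
      = sin (π * lam' / (2 * lam)) * (lam ^ 2 - lam' ^ 2) / (4 * lam * lam' ^ 3) ∧
    sin (π * lam' / (2 * lam)) * (lam ^ 2 - lam' ^ 2) / (4 * lam * lam' ^ 3)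
      ≤ π / 8 * (1 / lam' ^ 2 - 1 / lam ^ 2) := by
  have hvalue := deriv_deriv_hhat0_mul_pi (h'.trans_le hle).ne' h'.ne'
  obtain ⟨hnonneg, hupper⟩ := deriv_deriv_hhat0_mem_Icc h' hle
    (abs_of_pos (mul_pos h' Real.pi_pos)).le
  refine ⟨fun ω hω => ?_, ?_, ?_, hvalue ▸ hupper⟩
  · obtain ⟨hω_nonneg, hω_upper⟩ := deriv_deriv_hhat0_mem_Icc h' hle hω
    rwa [abs_of_nonneg hω_nonneg]
  · rw [abs_of_nonneg hnonneg, hvalue]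
  · rw [even_deriv_deriv_hhat0, abs_of_nonneg hnonneg, hvalue]

/-- for `λ > λ' > 1` the second derivative of `ĥ₀` satisfies
`|ĥ₀''(ω)| ≤ π/8` for all `|ω| ≤ λ'π`; in particular
`|ĥ₀''(±λ'π)| = sin(πλ'/(2λ)) (λ² − λ'²) / (4 λ λ'³) ≤ π/8`. -/
theorem hhat0_second_deriv_bound (lam lam' : ℝ) (h1 : 1 < lam') (h2 : lam' < lam) :
    (∀ ω : ℝ, |ω| ≤ lam' * π → |deriv (deriv (hhat0 lam lam')) ω| ≤ π / 8) ∧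
    |deriv (deriv (hhat0 lam lam')) (lam' * π)|
      = Real.sin (π * lam' / (2 * lam)) * (lam ^ 2 - lam' ^ 2) / (4 * lam * lam' ^ 3) ∧
    |deriv (deriv (hhat0 lam lam')) (-(lam' * π))|
      = Real.sin (π * lam' / (2 * lam)) * (lam ^ 2 - lam' ^ 2) / (4 * lam * lam' ^ 3) ∧
    Real.sin (π * lam' / (2 * lam)) * (lam ^ 2 - lam' ^ 2) / (4 * lam * lam' ^ 3)
      ≤ π / 8 := by
  have ⟨hbound, hright, hleft, hvalue⟩ :=
    hhat0_second_deriv_bound_general lam lam' (zero_lt_one.trans h1) h2.le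
  have hle := pi_div_eight_mul_sub_le (lam := lam) h1.le
  exact ⟨fun ω hω => (hbound ω hω).trans hle, hright, hleft, hvalue.trans hle⟩
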